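/- arXiv:2204.08076 — 7 statements merged into one kernel-verified Lean document; each statement's English description precedes it below -/
import Mathlib

section
/- Let p, q be coprime integers with 0 ≤ p ≤ q and q ≥ 1, and let ℓ_1 ℓ_2 ⋯ ℓ_{2q} be the letters of the Farey word W_{p/q}. Then for every integer i with 1 ≤ i ≤ q−1 one has ℓ_{q+i} = ℓ_{q−i}^{-1}; consequently, in the free group on the two generators X and Y, the product ℓ_1 ℓ_2 ⋯ ℓ_{2q−1} of the first 2q−1 letters is conjugate to the q-th letter ℓ_q, which is X^{±1} if q is even and Y^{±1} if q is odd. -/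
/-- Modified ceiling: `⌈x⌉` if `x ∉ ℤ`, and `x + 1` if `x ∈ ℤ`. -/
def mceil (x : ℚ) : ℤ := if x.den = 1 then x.num + 1 else ⌈x⌉

/-- The sign `ε_i = (−1)^{⌈pi/q⌉' + i + 1}` of the `i`-th letter of the Farey word `W_{p/q}`. -/
def fareySign (p q i : ℕ) : ℤˣ := (-1) ^ (mceil ((p * i : ℚ) / q) + (i : ℤ) + 1)

/-- The `i`-th letter (`1 ≤ i ≤ 2q`) of the Farey word `W_{p/q}`, as an element of the free
group on two generators `X = FreeGroup.of false` and `Y = FreeGroup.of true`: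
it is `Y^{ε_i}` if `i` is odd and `X^{ε_i}` if `i` is even. -/
def fareyLetter (p q i : ℕ) : FreeGroup Bool :=
  (if i % 2 = 1 then FreeGroup.of true else FreeGroup.of false) ^ ((fareySign p q i : ℤˣ) : ℤ)

/-!
For `1 ≤ i < q` the number `x = pi/q` is not an integer, so the modified ceilings of `p + x` and
`p - x` add up to `2p + 1`; this odd sum makes the signs at positions `q + i` and `q - i` opposite,
while the two positions carry the same generator. Hence the first `2q - 1` letters read
`u ℓ_q u⁻¹` with `u = ℓ_1 ⋯ ℓ_{q-1}`.
-/

theorem mceil_add_add_mceil_sub {x : ℚ} (hx : x.den ≠ 1) (n : ℤ) :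
    mceil (n + x) + mceil (n - x) = 2 * n + 1 := by
  have hadd : mceil (n + x) = n + ⌈x⌉ := by
    rw [mceil, if_neg (by rwa [Rat.intCast_add_den]), Int.ceil_intCast_add]
  have hsub : mceil (n - x) = n - ⌊x⌋ := by
    rw [mceil, if_neg (by rwa [Rat.intCast_sub_den]), sub_eq_add_neg, Int.ceil_intCast_add,
      Int.ceil_neg, ← sub_eq_add_neg]
  have hceil : ⌈x⌉ = ⌊x⌋ + 1 := by
    rw [Int.ceil_eq_floor_add_one_iff_notMem]
    rintro ⟨m, rfl⟩
    exact hx (Rat.den_intCast m)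
  rw [hadd, hsub, hceil]
  ring

theorem fareySign_add_mul_fareySign_sub {p q i : ℕ} (hiq : i ≤ q) (hdvd : ¬q ∣ p * i) :
    fareySign p q (q + i) * fareySign p q (q - i) = -1 := by
  have hq : q ≠ 0 := by
    rintro rfl
    exact hdvd (by simp [Nat.le_zero.1 hiq])
  have hden : ((p * i : ℚ) / q).den ≠ 1 := by
    rwa [← Nat.cast_mul, Ne, Rat.den_div_natCast_eq_one_iff _ _ hq]
  have hadd : (p * (q + i : ℕ) : ℚ) / q = (p : ℤ) + (p * i : ℚ) / q := by
    push_cast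
    field_simp
  have hsub : (p * (q - i : ℕ) : ℚ) / q = (p : ℤ) - (p * i : ℚ) / q := by
    push_cast [hiq]
    field_simp
  have hsum := mceil_add_add_mceil_sub hden p
  rw [fareySign, fareySign, ← zpow_add, hadd, hsub]
  refine Odd.neg_one_zpow ⟨p + q + 1, ?_⟩
  push_cast [hiq]
  linear_combination hsum

theorem fareyLetter_add_eq_inv_sub {p q i : ℕ} (hiq : i ≤ q) (hdvd : ¬q ∣ p * i) :
    fareyLetter p q (q + i) = (fareyLetter p q (q - i))⁻¹ := by
  have hsign : fareySign p q (q + i) = -fareySign p q (q - i) := by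
    rw [eq_mul_inv_of_mul_eq (fareySign_add_mul_fareySign_sub hiq hdvd), Int.units_inv_eq_self,
      neg_one_mul]
  have hparity : (q + i) % 2 = (q - i) % 2 := by omega
  rw [fareyLetter, fareyLetter, hparity, hsign, Units.val_neg, zpow_neg]

theorem fareyLetter_of_even {i : ℕ} (hi : Even i) (p q : ℕ) :
    fareyLetter p q i = FreeGroup.of false ^ (fareySign p q i : ℤ) := by
  rw [fareyLetter, if_neg (by rw [Nat.even_iff.1 hi]; exact zero_ne_one)]

theorem fareyLetter_of_odd {i : ℕ} (hi : Odd i) (p q : ℕ) :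
    fareyLetter p q i = FreeGroup.of true ^ (fareySign p q i : ℤ) := by
  rw [fareyLetter, if_pos (Nat.odd_iff.1 hi)]

theorem inv_prod_map_range {G : Type*} [Group G] (f : ℕ → G) (n : ℕ) :
    ((List.range n).map f).prod⁻¹ = ((List.range n).map fun i => (f (n - 1 - i))⁻¹).prod := by
  rw [List.prod_inv_reverse]
  congr 1
  exact List.ext_getElem (by simp) (by simp)

theorem isConj_prod_map_range_of_add_eq_inv_sub {G : Type*} [Group G] {f : ℕ → G} {n : ℕ}
    (hf : ∀ i, 1 ≤ i → i ≤ n → f (n + i) = (f (n - i))⁻¹) :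
    IsConj ((List.range (2 * n + 1)).map f).prod (f n) := by
  set u := ((List.range n).map f).prod with hu
  have hright : ((List.range n).map fun i => f (n + 1 + i)).prod = u⁻¹ := by
    rw [hu, inv_prod_map_range]
    refine congrArg List.prod (List.map_congr_left fun i hi => ?_)
    rw [add_assoc, hf (1 + i) (by omega) (by grind), Nat.sub_sub]
  have hprod : ((List.range (2 * n + 1)).map f).prod = u * f n * u⁻¹ := by
    rw [show 2 * n + 1 = n + 1 + n by ring, List.range_add, List.map_append, List.prod_append,
      List.prod_range_succ, List.map_map, ← hright]
    rfl
  exact (isConj_iff.2 ⟨u, hprod.symm⟩).symm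

theorem farey_word_symmetry_general (p q : ℕ) (hq : 1 ≤ q) (hcop : Nat.Coprime p q) :
    (∀ i : ℕ, 1 ≤ i → i ≤ q - 1 →
      fareyLetter p q (q + i) = (fareyLetter p q (q - i))⁻¹) ∧
    IsConj (((List.range (2 * q - 1)).map (fun j => fareyLetter p q (j + 1))).prod)
      (fareyLetter p q q) ∧
    (if q % 2 = 0 then ∃ ε : ℤˣ, fareyLetter p q q = FreeGroup.of false ^ ((ε : ℤˣ) : ℤ)
      else ∃ ε : ℤˣ, fareyLetter p q q = FreeGroup.of true ^ ((ε : ℤˣ) : ℤ)) := by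
  have hsymm : ∀ i, 1 ≤ i → i ≤ q - 1 →
      fareyLetter p q (q + i) = (fareyLetter p q (q - i))⁻¹ := by
    intro i hi hiq
    have hdvd : ¬q ∣ p * i := fun h =>
      Nat.not_dvd_of_pos_of_lt hi (by omega) (hcop.symm.dvd_of_dvd_mul_left h)
    exact fareyLetter_add_eq_inv_sub (by omega) hdvd
  refine ⟨hsymm, ?_, ?_⟩
  · obtain ⟨n, rfl⟩ := Nat.exists_eq_add_of_le' hq
    refine isConj_prod_map_range_of_add_eq_inv_sub (f := fun j => fareyLetter p (n + 1) (j + 1))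
      fun i hi hin => ?_
    simpa only [Nat.add_right_comm, Nat.sub_add_comm hin] using hsymm i hi hin
  · split_ifs with hparity
    · exact ⟨_, fareyLetter_of_even (Nat.even_iff.2 hparity) p q⟩
    · exact ⟨_, fareyLetter_of_odd (Nat.odd_iff.2 (Nat.mod_two_ne_zero.1 hparity)) p q⟩

/-- The letters of the Farey word `W_{p/q}` satisfy `ℓ_{q+i} = ℓ_{q−i}⁻¹` for `1 ≤ i ≤ q−1`;
consequently the product of the first `2q−1` letters is conjugate to the `q`-th letter,
which is `X^{±1}` if `q` is even and `Y^{±1}` if `q` is odd. -/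
theorem farey_word_symmetry (p q : ℕ) (hq : 1 ≤ q) (hpq : p ≤ q) (hcop : Nat.Coprime p q) :
    (∀ i : ℕ, 1 ≤ i → i ≤ q - 1 →
      fareyLetter p q (q + i) = (fareyLetter p q (q - i))⁻¹) ∧
    IsConj (((List.range (2 * q - 1)).map (fun j => fareyLetter p q (j + 1))).prod)
      (fareyLetter p q q) ∧
    (if q % 2 = 0 then ∃ ε : ℤˣ, fareyLetter p q q = FreeGroup.of false ^ ((ε : ℤˣ) : ℤ)
      else ∃ ε : ℤˣ, fareyLetter p q q = FreeGroup.of true ^ ((ε : ℤˣ) : ℤ)) :=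
  farey_word_symmetry_general p q hq hcop
end

section
/- Let p/q < r/s be Farey neighbours in lowest terms with p, r ≥ 0 and q, s ≥ 1 (so qr − ps = 1) and with both fractions in [0,1]. Then the letter sequence of the Farey word W_{(p+r)/(q+s)} is obtained from the concatenation of the letter sequences of W_{p/q} and W_{r/s} by replacing the (q+s)-th letter of the concatenation with its inverse (all other letters agree). -/
/-- The `i`-th letter (`1 ≤ i ≤ 2q + 2s`) of the concatenation of the letter sequences of
`W_{p/q}` and `W_{r/s}`. -/
def concatLetter (p q r s i : ℕ) : FreeGroup Bool :=
  if i ≤ 2 * q then fareyLetter p q i else fareyLetter r s (i - 2 * q)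

/-!
Up to the parity of `i`, the sign of the `i`-th letter of `W_{p/q}` is the parity of `⌊pi/q⌋`, so
the theorem compares two integer-valued height functions: that of the line of slope
`(p+r)/(q+s)`, and that of the broken line from `(0, 0)` through `(2q, 2p)` to `(2q+2s, 2p+2r)`.
Since `qr - ps = 1`, every lattice point is `v • (q, p) + u • (s, r)` with `u, v ∈ ℤ`, and lying
below a line becomes an inequality in `u` and `v` alone. In columns `0` to `2q+2s`, the only lattice
point above one line and not above the other is `u = v = 1`, in column `q + s`.
-/

theorem mceil_eq_floor_add_one (x : ℚ) : mceil x = ⌊x⌋ + 1 := by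
  rw [mceil]
  split_ifs with hden
  · rw [Rat.floor_def', hden, Nat.cast_one, Int.ediv_one]
  · refine (Int.ceil_eq_floor_add_one_iff_notMem x).mpr ?_
    rintro ⟨n, rfl⟩
    exact hden (Rat.den_intCast n)

/-- The letter in column `i` of a word following a lattice path which has height `n` in that
column: `Y^{±1}` if `i` is odd and `X^{±1}` if `i` is even, with sign `(-1)^{n + i}`. -/
def letterAtHeight (n : ℤ) (i : ℕ) : FreeGroup Bool :=
  (if i % 2 = 1 then FreeGroup.of true else FreeGroup.of false) ^
    (((-1) ^ (n + i) : ℤˣ) : ℤ)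

theorem letterAtHeight_add_one (n : ℤ) (i : ℕ) :
    letterAtHeight (n + 1) i = (letterAtHeight n i)⁻¹ := by
  rw [letterAtHeight, letterAtHeight, ← zpow_neg, add_right_comm, zpow_add_one, mul_neg_one,
    Units.val_neg]

theorem letterAtHeight_two_mul_add (m n : ℤ) (i k : ℕ) :
    letterAtHeight (2 * m + n) (2 * k + i) = letterAtHeight n i := by
  have hsign : (-1 : ℤˣ) ^ (2 * m + n + (2 * k + i : ℕ)) = (-1) ^ (n + i) := by
    have hexp : 2 * m + n + (2 * k + i : ℕ) = 2 * (m + k) + (n + i) := by push_cast; ring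
    rw [hexp, zpow_add, (even_two_mul _).neg_one_zpow, one_mul]
  rw [letterAtHeight, letterAtHeight, hsign, Nat.mul_add_mod]

theorem fareyLetter_eq_letterAtHeight (p q i : ℕ) :
    fareyLetter p q i = letterAtHeight (p * i / q) i := by
  have hfloor : ⌊(p * i : ℚ) / q⌋ = (p * i / q : ℤ) := by
    simpa only [Int.cast_mul, Int.cast_natCast] using Rat.floor_intCast_div_natCast (p * i) q
  have hsign : fareySign p q i = (-1) ^ (p * i / q + i : ℤ) := by
    rw [fareySign, mceil_eq_floor_add_one, hfloor, add_right_comm _ 1, add_assoc _ 1,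
      one_add_one_eq_two, zpow_add, even_two.neg_one_zpow, mul_one]
  rw [fareyLetter, letterAtHeight, hsign]

/-- The integer part of the height, in column `i`, of the broken line that runs from `(0, 0)` to
`(2q, 2p)` and continues with slope `r/s`. It governs the signs of the concatenation of `W_{p/q}`
and `W_{r/s}`, as `p * i / q` does for `W_{p/q}`. -/
def concatHeight (p q r s i : ℤ) : ℤ :=
  if i ≤ 2 * q then p * i / q else 2 * p + r * (i - 2 * q) / s

theorem concatLetter_eq_letterAtHeight (p q r s i : ℕ) :
    concatLetter p q r s i = letterAtHeight (concatHeight p q r s i) i := by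
  rw [concatLetter, concatHeight]
  by_cases hi : i ≤ 2 * q
  · rw [if_pos hi, if_pos (by exact_mod_cast hi), fareyLetter_eq_letterAtHeight]
  · obtain ⟨j, rfl⟩ : ∃ j, i = 2 * q + j := Nat.exists_eq_add_of_le (not_le.mp hi).le
    have hcast : ((2 * q + j : ℕ) : ℤ) - 2 * q = j := by push_cast; ring
    rw [if_neg hi, if_neg (by exact_mod_cast hi), hcast, letterAtHeight_two_mul_add,
      Nat.add_sub_cancel_left, fareyLetter_eq_letterAtHeight]

section LatticeCoordinates

variable {p q r s u v i : ℤ}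

theorem exists_eq_mul_add_mul_of_neighbours (h : q * r = p * s + 1) (i n : ℤ) :
    ∃ u v, i = v * q + u * s ∧ n = v * p + u * r :=
  ⟨n * q - p * i, r * i - n * s, by linear_combination -i * h, by linear_combination -n * h⟩

theorem le_ediv_iff_mul_le_mul_of_neighbours (h : q * r = p * s + 1) {a b : ℤ}
    (hab : 0 < a * q + b * s) :
    v * p + u * r ≤ (a * p + b * r) * (v * q + u * s) / (a * q + b * s) ↔ a * u ≤ b * v := by
  have hcross : (v * p + u * r) * (a * q + b * s) - (a * p + b * r) * (v * q + u * s) =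
      a * u - b * v := by
    linear_combination (a * u - b * v) * h
  rw [Int.le_ediv_iff_mul_le hab, ← sub_nonpos, hcross, sub_nonpos]

theorem le_iff_nonpos_of_le_two_mul (hq : 0 < q) (hs : 0 < s) (h₀ : 0 ≤ v * q + u * s)
    (h₂ : v * q + u * s ≤ 2 * q) (hne : v * q + u * s ≠ q + s) : u ≤ v ↔ u ≤ 0 := by
  refine ⟨fun huv => ?_, fun hu => ?_⟩
  · by_contra! hu
    have hv : v = 1 := by
      have : v < 2 := by nlinarith
      omega
    obtain rfl : u = 1 := by omega
    exact hne (by rw [hv, one_mul, one_mul])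
  · have : 0 ≤ v := by nlinarith
    omega

theorem le_iff_two_le_of_two_mul_lt (hq : 0 < q) (hs : 0 < s) (h₀ : 2 * q < v * q + u * s)
    (h₂ : v * q + u * s ≤ 2 * (q + s)) (hne : v * q + u * s ≠ q + s) : u ≤ v ↔ 2 ≤ v := by
  refine ⟨fun huv => ?_, fun hv => ?_⟩
  · by_contra! hv
    have hu : u = 1 := by
      have : 0 < u := by nlinarith
      omega
    obtain rfl : v = 1 := by omega
    exact hne (by rw [hu, one_mul, one_mul])
  · have : u ≤ 2 := by nlinarith
    omega

theorem mediant_ediv_eq_concatHeight (hq : 0 < q) (hs : 0 < s) (h : q * r = p * s + 1)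
    (h₀ : 0 ≤ i) (h₂ : i ≤ 2 * (q + s)) (hne : i ≠ q + s) :
    (p + r) * i / (q + s) = concatHeight p q r s i := by
  refine eq_of_forall_le_iff fun n => ?_
  obtain ⟨u, v, rfl, rfl⟩ := exists_eq_mul_add_mul_of_neighbours h i n
  have hmediant : v * p + u * r ≤ (p + r) * (v * q + u * s) / (q + s) ↔ u ≤ v := by
    simpa only [one_mul] using
      le_ediv_iff_mul_le_mul_of_neighbours h (a := 1) (b := 1) (by linarith)
  rw [hmediant, concatHeight]
  split_ifs with hi
  · have hleft : v * p + u * r ≤ p * (v * q + u * s) / q ↔ u ≤ 0 := by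
      simpa only [one_mul, zero_mul, add_zero] using
        le_ediv_iff_mul_le_mul_of_neighbours h (a := 1) (b := 0) (by linarith)
    rw [hleft, le_iff_nonpos_of_le_two_mul hq hs h₀ hi hne]
  · -- Translating by `(-2q, -2p)` moves the second segment onto the line through the origin.
    have hright : v * p + u * r - 2 * p ≤ r * (v * q + u * s - 2 * q) / s ↔ 0 ≤ v - 2 := by
      have htranslate (x y : ℤ) : v * x + u * y - 2 * x = (v - 2) * x + u * y := by ring
      rw [htranslate, htranslate]
      simpa only [one_mul, zero_mul, zero_add] using
        le_ediv_iff_mul_le_mul_of_neighbours h (a := 0) (b := 1) (by linarith)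
    rw [← sub_le_iff_le_add', hright, sub_nonneg,
      le_iff_two_le_of_two_mul_lt hq hs (not_le.mp hi) h₂ hne]

theorem concatHeight_add_eq_sub_one (hq : 0 < q) (hs : 0 < s) (h : q * r = p * s + 1) :
    concatHeight p q r s (q + s) = p + r - 1 := by
  rw [concatHeight]
  split_ifs
  · rw [Int.ediv_eq_iff_of_pos hq]
    constructor <;> linarith
  · have hdiv : r * (q + s - 2 * q) / s = r - p - 1 := by
      rw [Int.ediv_eq_iff_of_pos hs]
      constructor <;> linarith
    rw [hdiv]
    ring

end LatticeCoordinates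

theorem farey_word_mediant_general {p q r s i : ℕ} (hs : 1 ≤ s) (hnbr : q * r = p * s + 1)
    (hi : i ≤ 2 * (q + s)) :
    fareyLetter (p + r) (q + s) i =
      if i = q + s then (concatLetter p q r s i)⁻¹ else concatLetter p q r s i := by
  have hq : (0 : ℤ) < q := by exact_mod_cast Nat.pos_of_ne_zero (by rintro rfl; omega)
  have hs' : (0 : ℤ) < s := by exact_mod_cast hs
  have hnbr' : (q * r : ℤ) = p * s + 1 := by exact_mod_cast hnbr
  rw [fareyLetter_eq_letterAtHeight, concatLetter_eq_letterAtHeight, Nat.cast_add, Nat.cast_add]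
  split_ifs with hmid
  · subst hmid
    rw [← letterAtHeight_add_one, Nat.cast_add, concatHeight_add_eq_sub_one hq hs' hnbr',
      sub_add_cancel, Int.mul_ediv_cancel _ (by positivity)]
  · rw [mediant_ediv_eq_concatHeight hq hs' hnbr' (by positivity) (by exact_mod_cast hi)
      (by exact_mod_cast hmid)]

/-- If `p/q < r/s` are Farey neighbours in `[0,1]` (so `qr − ps = 1`), then the letter sequence
of the mediant Farey word `W_{(p+r)/(q+s)}` is obtained from the concatenation of the letter
sequences of `W_{p/q}` and `W_{r/s}` by inverting the `(q+s)`-th letter. -/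
theorem farey_word_mediant (p q r s : ℕ) (hq : 1 ≤ q) (hs : 1 ≤ s)
    (hpq : p ≤ q) (hrs : r ≤ s) (hcop1 : Nat.Coprime p q) (hcop2 : Nat.Coprime r s)
    (hnbr : q * r = p * s + 1) :
    ∀ i : ℕ, 1 ≤ i → i ≤ 2 * (q + s) →
      fareyLetter (p + r) (q + s) i =
        if i = q + s then (concatLetter p q r s i)⁻¹ else concatLetter p q r s i := by
  exact fun i _ hi => farey_word_mediant_general hs hnbr hi
end

section
/- Let p/q < r/s be Farey neighbours in lowest terms with p, r ≥ 0, q, s ≥ 1 and qr − ps = 1. Then for every integer i with 0 < i ≤ 2q there is no integer lying strictly between the rational numbers p·i/q and (p+r)·i/(q+s). -/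
/-!
If an integer `n` lies strictly between `p * i / q` and `u * i / v`, then `n * q - p * i` and
`u * i - n * v` are both at least `1`. Weighted by `v` and `q`, they sum to `(q * u - p * v) * i`,
which is `i` for Farey neighbours `p / q < u / v`; hence `q + v ≤ i`. Now `p / q` and its mediant
with `r / s` are again Farey neighbours, and `q + (q + s)` exceeds `2 * q`.
-/

/-- The fractions `p / q < r / s` are Farey neighbours. They are encoded by their numerators and
positive denominators; the determinant equation expresses both the order of the fractions and the
fact that they are in lowest terms. Numerators may be negative. -/
structure IsFareyNeighbour (p q r s : ℤ) : Prop where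
  left_den_pos : 0 < q
  right_den_pos : 0 < s
  det_eq_one : q * r - p * s = 1

theorem IsFareyNeighbour.mediant_right {p q r s : ℤ} (h : IsFareyNeighbour p q r s) :
    IsFareyNeighbour p q (p + r) (q + s) where
  left_den_pos := h.left_den_pos
  right_den_pos := add_pos h.left_den_pos h.right_den_pos
  det_eq_one := by linear_combination h.det_eq_one

theorem add_le_det_mul_of_mul_lt_of_mul_lt {p q u v i n : ℤ} (hq : 0 ≤ q) (hv : 0 ≤ v)
    (hleft : p * i < n * q) (hright : n * v < u * i) : q + v ≤ (q * u - p * v) * i := by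
  have hleft_gap : 1 ≤ n * q - p * i := Int.sub_pos_of_lt hleft
  have hright_gap : 1 ≤ u * i - n * v := Int.sub_pos_of_lt hright
  calc
    q + v = 1 * v + 1 * q := by ring
    _ ≤ (n * q - p * i) * v + (u * i - n * v) * q := by gcongr
    _ = (q * u - p * v) * i := by ring

theorem no_integer_between_left_general {K : Type*} [Field K] [LinearOrder K]
    [IsStrictOrderedRing K] {p q u v i : ℤ} (h : IsFareyNeighbour p q u v) (hi : i < q + v) :
    ¬ ∃ n : ℤ, ((p * i : ℤ) : K) / (q : K) < (n : K) ∧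
      (n : K) < ((u * i : ℤ) : K) / (v : K) := by
  rintro ⟨n, hleft, hright⟩
  rw [div_lt_iff₀ (Int.cast_pos.mpr h.left_den_pos)] at hleft
  rw [lt_div_iff₀ (Int.cast_pos.mpr h.right_den_pos)] at hright
  have hle : q + v ≤ (q * u - p * v) * i :=
    add_le_det_mul_of_mul_lt_of_mul_lt h.left_den_pos.le h.right_den_pos.le
      (by exact_mod_cast hleft) (by exact_mod_cast hright)
  rw [h.det_eq_one, one_mul] at hle
  exact hi.not_ge hle

/-- If `p/q < r/s` are Farey neighbours in lowest terms (`qr − ps = 1`), then for every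
integer `i` with `0 < i ≤ 2q` there is no integer strictly between `p·i/q` and
`(p+r)·i/(q+s)`. -/
theorem no_integer_between_left (p q r s : ℤ) (hp : 0 ≤ p) (hr : 0 ≤ r)
    (hq : 1 ≤ q) (hs : 1 ≤ s) (hcop1 : Int.gcd p q = 1) (hcop2 : Int.gcd r s = 1)
    (hnbr : q * r - p * s = 1) :
    ∀ i : ℤ, 0 < i → i ≤ 2 * q →
      ¬ ∃ n : ℤ, ((p * i : ℤ) : ℚ) / (q : ℚ) < (n : ℚ) ∧
        (n : ℚ) < (((p + r) * i : ℤ) : ℚ) / ((q + s : ℤ) : ℚ) := by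
  have hfarey : IsFareyNeighbour p q r s := ⟨hq, hs, hnbr⟩
  exact fun i _ hi ↦ no_integer_between_left_general hfarey.mediant_right (by lia)
end

section
/- Let p/q < r/s be Farey neighbours in lowest terms with p, r ≥ 0, q, s ≥ 1 and qr − ps = 1. Then for every integer i with 0 < i < 2s there is no integer lying strictly between the rational numbers r·i/s + 2p and (p+r)·(2q+i)/(q+s). -/
/-!
The mediant `(p + r) / (q + s)` is again a left Farey neighbour of `r / s`. Shifting the index to
`j = k q + i`, with `k = 2` in the theorem, turns the two bounds into `(r j - k) / s` and
`(p + r) j / (q + s)`. For neighbours `a / b < c / d`, the identity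
`j = b (c j - n d) - d (a j - n b)` recovers `j` from the two determinants of `(n, j)`. If an
integer `n` lies strictly between `(c j - k) / d` and `a j / b`, these determinants are at most
`k - 1` and at least `1`, which forces `j ≤ (k - 1) b - d`.
-/

section CommRing

variable {R : Type*} [CommRing R]

theorem mul_sub_mul_mediant_left (p q r s : R) :
    (q + s) * r - (p + r) * s = q * r - p * s := by
  ring

theorem eq_mul_det_sub_mul_det {a b c d : R} (hdet : b * c - a * d = 1) (x y : R) :
    y = b * (c * y - x * d) - d * (a * y - x * b) := by
  linear_combination -y * hdet

end CommRing

theorem le_of_mul_sub_lt_of_mul_lt {a b c d j k n : ℤ} (hdet : b * c - a * d = 1)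
    (hb : 0 ≤ b) (hd : 0 ≤ d) (hlow : c * j - k < n * d) (hupp : n * b < a * j) :
    j ≤ (k - 1) * b - d := by
  have hright : c * j - n * d ≤ k - 1 := by lia
  have hleft : 1 ≤ a * j - n * b := by lia
  calc
    j = b * (c * j - n * d) - d * (a * j - n * b) := eq_mul_det_sub_mul_det hdet n j
    _ ≤ b * (k - 1) - d * 1 := by gcongr
    _ = (k - 1) * b - d := by ring

section OrderedField

variable {K : Type*} [Field K]

theorem mul_div_add_mul_eq_div {p q r s : K} (hs : s ≠ 0) (hdet : q * r - p * s = 1) (i k : K) :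
    r * i / s + k * p = (r * (k * q + i) - k) / s := by
  rw [div_add' _ _ _ hs]
  congr 1
  linear_combination -k * hdet

variable [LinearOrder K] [IsStrictOrderedRing K]

theorem not_exists_int_between_of_det_eq_one {a b c d j k : ℤ} (hdet : b * c - a * d = 1)
    (hb : 0 < b) (hd : 0 < d) (hj : (k - 1) * b - d < j) :
    ¬ ∃ n : ℤ, ((c * j - k : ℤ) : K) / (d : K) < (n : K) ∧
      (n : K) < ((a * j : ℤ) : K) / (b : K) := by
  rintro ⟨n, hlow, hupp⟩
  rw [div_lt_iff₀ (Int.cast_pos.mpr hd)] at hlow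
  rw [lt_div_iff₀ (Int.cast_pos.mpr hb)] at hupp
  exact hj.not_ge <|
    le_of_mul_sub_lt_of_mul_lt hdet hb.le hd.le (mod_cast hlow) (mod_cast hupp)

theorem no_integer_between_right_general {p q r s i k : ℤ} (hs : 0 < s) (hqs : 0 < q + s)
    (hnbr : q * r - p * s = 1) (hi : (k - 2) * s - q < i) :
    ¬ ∃ n : ℤ, ((r * i : ℤ) : K) / (s : K) + (k : K) * (p : K) < (n : K) ∧
      (n : K) < (((p + r) * (k * q + i) : ℤ) : K) / ((q + s : ℤ) : K) := by
  have hmediant : (q + s) * r - (p + r) * s = 1 :=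
    (mul_sub_mul_mediant_left p q r s).trans hnbr
  have hlow : ((r * i : ℤ) : K) / s + k * p = ((r * (k * q + i) - k : ℤ) : K) / s := by
    push_cast
    exact mul_div_add_mul_eq_div (Int.cast_ne_zero.mpr hs.ne') (mod_cast hnbr) _ _
  rw [hlow]
  exact not_exists_int_between_of_det_eq_one hmediant hqs hs (by linarith)

end OrderedField

/-- If `p/q < r/s` are Farey neighbours in lowest terms (`qr − ps = 1`), then for every
integer `i` with `0 < i < 2s` there is no integer strictly between `r·i/s + 2p` and
`(p+r)·(2q+i)/(q+s)`. -/
theorem no_integer_between_right (p q r s : ℤ) (hp : 0 ≤ p) (hr : 0 ≤ r)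
    (hq : 1 ≤ q) (hs : 1 ≤ s) (hcop1 : Int.gcd p q = 1) (hcop2 : Int.gcd r s = 1)
    (hnbr : q * r - p * s = 1) :
    ∀ i : ℤ, 0 < i → i < 2 * s →
      ¬ ∃ n : ℤ, ((r * i : ℤ) : ℚ) / (s : ℚ) + 2 * (p : ℚ) < (n : ℚ) ∧
        (n : ℚ) < (((p + r) * (2 * q + i) : ℤ) : ℚ) / ((q + s : ℤ) : ℚ) := by
  intro i hi _
  exact no_integer_between_right_general (k := 2) (by lia) (by lia) hnbr (by lia)
end

section
/- Let R be a commutative ring and let d be a function from normalised pairs to the units of R which is multiplicative on Farey neighbours, i.e. d(γ ⊕ β) = d(γ)·d(β) whenever γ, β are Farey neighbours. Let F be a Farey recursive function with anti-determinant d, let γ_L, γ_R be Farey neighbours with mediant α = γ_L ⊕ γ_R, let (β_k)_{k∈ℤ} be the associated boundary sequence, and set M_α = [[0, 1], [−d(α), −F(α)]], an invertible 2×2 matrix over R. Then for every n ∈ ℤ: if n ≥ 0 then M_α^n · (F(β_0), F(β_1))ᵀ = (F(β_n), F(β_{n+1}))ᵀ; if n = −1 then M_α^n · (F(β_0), F(β_1))ᵀ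 = (d(β_{−1})^{−1} F(β_{−1}), F(β_0))ᵀ; and if n ≤ −2 then M_α^n · (F(β_0), F(β_1))ᵀ = (d(β_{−1})^{−1} d(α)^{n+1} F(β_n), d(β_{−1})^{−1} d(α)^{n+2} F(β_{n+1}))ᵀ, where powers of the unit d(α) with negative exponents denote powers of its inverse. -/
/-- A normalised pair `(p, q) ∈ ℤ × ℤ` representing an extended rational: `gcd(p,q) = 1`
and either `q > 0`, or `q = 0` and `p = 1` (representing `∞`). -/
def Normalised (x : ℤ × ℤ) : Prop :=
  Int.gcd x.1 x.2 = 1 ∧ (0 < x.2 ∨ (x.2 = 0 ∧ x.1 = 1))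

/-- Two pairs `(p,q)` and `(r,s)` are Farey neighbours if `|ps − qr| = 1`.
Their mediant is the componentwise sum `(p+r, q+s)`. -/
def FareyNbr (x y : ℤ × ℤ) : Prop := (x.1 * y.2 - x.2 * y.1).natAbs = 1

/-- `d` is multiplicative on Farey neighbours: `d(γ ⊕ β) = d(γ)·d(β)`. -/
def MultiplicativeOnNbrs {R : Type*} [CommRing R] (d : ℤ × ℤ → Rˣ) : Prop :=
  ∀ γ β : ℤ × ℤ, Normalised γ → Normalised β → FareyNbr γ β → d (γ + β) = d γ * d β

/-- `F` is a Farey recursive function with anti-determinant `d`: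
`F((γ ⊕ α) ⊕ α) = −d(α)·F(γ) − F(α)·F(γ ⊕ α)` for Farey neighbours `γ, α`. -/
def IsFareyRecursive {R : Type*} [CommRing R] (d : ℤ × ℤ → Rˣ) (F : ℤ × ℤ → R) : Prop :=
  ∀ γ α : ℤ × ℤ, Normalised γ → Normalised α → FareyNbr γ α →
    F (γ + α + α) = -(d α : R) * F γ - F α * F (γ + α)

/-!
Reversing the boundary sequence swaps `γ_L` and `γ_R`, so one Farey recursion governs both of its
halves: forwards on `k ≥ 0`, backwards on `k < 0`. Weighting the value at `k < 0` by
`d(γ_L)⁻¹ d(α)^(k+1)` turns the backward recursion into the forward one, and since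
`d(α) = d(γ_L) d(γ_R)` the recursion also holds across the junction. The weighted values therefore
form a two-sided solution of `u (n + 2) = -d(α) u n - F(α) u (n + 1)`, whose companion matrix is
`M_α`.
-/

section MatrixPowers

open Matrix

theorem zpow_mulVec_eq_of_forall_mulVec_eq {m R : Type*} [Fintype m] [DecidableEq m] [CommRing R]
    {M : Matrix m m R} (hM : IsUnit M.det) {v : ℤ → m → R} (hv : ∀ n, M *ᵥ v n = v (n + 1))
    (n : ℤ) : M ^ n *ᵥ v 0 = v n := by
  induction n with
  | zero => rw [zpow_zero, one_mulVec]
  | succ n ih => rw [add_comm, zpow_one_add hM, ← mulVec_mulVec, ih, hv, add_comm]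
  | pred n ih =>
    apply mulVec_injective_of_isUnit ((isUnit_iff_isUnit_det M).mpr hM)
    rw [mulVec_mulVec, ← zpow_one_add hM, add_sub_cancel, ih, hv, sub_add_cancel]

theorem companion_zpow_mulVec {R : Type*} [CommRing R] (a : Rˣ) (b : R) {u : ℤ → R}
    (hu : ∀ n, u (n + 2) = -(a : R) * u n - b * u (n + 1)) (n : ℤ) :
    !![0, 1; -(a : R), -b] ^ n *ᵥ ![u 0, u 1] = ![u n, u (n + 1)] := by
  have hdet : IsUnit (!![0, 1; -(a : R), -b]).det := by simp [det_fin_two_of]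
  refine zpow_mulVec_eq_of_forall_mulVec_eq hdet (v := fun k => ![u k, u (k + 1)]) (fun k => ?_) n
  rw [add_assoc, one_add_one_eq_two, hu]
  ext i
  fin_cases i <;> simp [mulVec, dotProduct, Fin.sum_univ_two, sub_eq_add_neg]

end MatrixPowers

section FareyNeighbours

variable {x y : ℤ × ℤ}

theorem FareyNbr.symm (h : FareyNbr x y) : FareyNbr y x := by
  rw [FareyNbr, ← Int.natAbs_neg, neg_sub, mul_comm y.2, mul_comm y.1]
  exact h

theorem FareyNbr.add_left (h : FareyNbr x y) : FareyNbr (x + y) y := by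
  rw [FareyNbr, Prod.fst_add, Prod.snd_add, add_mul, add_mul, mul_comm y.2,
    add_sub_add_right_eq_sub]
  exact h

theorem FareyNbr.isCoprime_add (h : FareyNbr x y) : IsCoprime (x + y).1 (x + y).2 := by
  rcases Int.natAbs_eq_iff.mp h with h | h
  · exact ⟨y.2, -y.1, by rw [Prod.fst_add, Prod.snd_add]; linear_combination h⟩
  · exact ⟨-y.2, y.1, by rw [Prod.fst_add, Prod.snd_add]; linear_combination -h⟩

theorem Normalised.add (hx : Normalised x) (hy : Normalised y) (h : FareyNbr x y) :
    Normalised (x + y) := by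
  refine ⟨Int.isCoprime_iff_gcd_eq_one.mp h.isCoprime_add, Or.inl ?_⟩
  rw [Prod.snd_add]
  rcases hx.2 with hx | ⟨hx₂, hx₁⟩ <;> rcases hy.2 with hy | ⟨hy₂, hy₁⟩
  · omega
  · omega
  · omega
  · simp [FareyNbr, hx₁, hx₂, hy₁, hy₂] at h

theorem Normalised.add_zsmul (hx : Normalised x) (hy : Normalised y) (h : FareyNbr x y) {k : ℤ}
    (hk : 0 ≤ k) : Normalised (x + k • y) ∧ FareyNbr (x + k • y) y := by
  induction k, hk using Int.leInduction with
  | base => simpa only [zero_smul, add_zero] using And.intro hx h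
  | succ k _ ih =>
    rw [add_smul, one_smul, ← add_assoc]
    exact ⟨ih.1.add hy ih.2, ih.2.add_left⟩

end FareyNeighbours

/-- The boundary sequence `(β_k)` of the mediant `γL + γR`, indexed by all integers: the half
`k ≥ 0` starts at `γR`, and the half `k < 0` starts at `γL` and is traversed backwards. -/
def boundarySeq (γL γR : ℤ × ℤ) (k : ℤ) : ℤ × ℤ :=
  if 0 ≤ k then γR + k • (γL + γR) else γL + (-k - 1) • (γL + γR)

section BoundarySeq

theorem boundarySeq_of_nonneg {γL γR : ℤ × ℤ} {k : ℤ} (hk : 0 ≤ k) :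
    boundarySeq γL γR k = γR + k • (γL + γR) :=
  if_pos hk

variable (γL γR : ℤ × ℤ)

theorem boundarySeq_swap (k : ℤ) : boundarySeq γR γL (-1 - k) = boundarySeq γL γR k := by
  rw [boundarySeq, boundarySeq, add_comm γR γL]
  split_ifs
  · omega
  · rw [show -1 - k = -k - 1 by ring]
  · rw [show -(-1 - k) - 1 = k by ring]
  · omega

theorem boundarySeq_zero : boundarySeq γL γR 0 = γR := by
  rw [boundarySeq_of_nonneg le_rfl, zero_smul, add_zero]

theorem boundarySeq_one : boundarySeq γL γR 1 = γL + γR + γR := by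
  rw [boundarySeq_of_nonneg zero_le_one, one_smul, add_comm]

theorem boundarySeq_neg_one : boundarySeq γL γR (-1) = γL := by
  rw [← boundarySeq_swap, sub_self, boundarySeq_zero]

theorem boundarySeq_neg_two : boundarySeq γL γR (-2) = γR + γL + γL := by
  rw [← boundarySeq_swap, ← boundarySeq_one]
  norm_num only

end BoundarySeq

namespace IsFareyRecursive

variable {R : Type*} [CommRing R] {d : ℤ × ℤ → Rˣ} {F : ℤ × ℤ → R}

theorem add_zsmul (hF : IsFareyRecursive d F) {x y : ℤ × ℤ} (hx : Normalised x)
    (hy : Normalised y) (h : FareyNbr x y) {k : ℤ} (hk : 0 ≤ k) :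
    F (x + (k + 2) • y) = -(d y : R) * F (x + k • y) - F y * F (x + (k + 1) • y) := by
  obtain ⟨hnorm, hnbr⟩ := hx.add_zsmul hy h hk
  rw [show x + (k + 2) • y = x + k • y + y + y by module,
    show x + (k + 1) • y = x + k • y + y by module]
  exact hF _ _ hnorm hy hnbr

variable {γL γR : ℤ × ℤ}

theorem boundarySeq_add_two (hF : IsFareyRecursive d F) (hγL : Normalised γL)
    (hγR : Normalised γR) (hnbr : FareyNbr γL γR) {k : ℤ} (hk : 0 ≤ k) :
    F (boundarySeq γL γR (k + 2)) = -(d (γL + γR) : R) * F (boundarySeq γL γR k) -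
      F (γL + γR) * F (boundarySeq γL γR (k + 1)) := by
  rw [boundarySeq_of_nonneg hk, boundarySeq_of_nonneg (by omega : 0 ≤ k + 1),
    boundarySeq_of_nonneg (by omega : 0 ≤ k + 2)]
  exact hF.add_zsmul hγR (hγL.add hγR hnbr) hnbr.add_left.symm hk

theorem boundarySeq_of_add_two_neg (hF : IsFareyRecursive d F) (hγL : Normalised γL)
    (hγR : Normalised γR) (hnbr : FareyNbr γL γR) {k : ℤ} (hk : k + 2 < 0) :
    F (boundarySeq γL γR k) = -(d (γL + γR) : R) * F (boundarySeq γL γR (k + 2)) -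
      F (γL + γR) * F (boundarySeq γL γR (k + 1)) := by
  have hrev := hF.boundarySeq_add_two hγR hγL hnbr.symm (k := -1 - (k + 2)) (by omega)
  rwa [show -1 - (k + 2) + 2 = -1 - k by ring, show -1 - (k + 2) + 1 = -1 - (k + 1) by ring,
    boundarySeq_swap, boundarySeq_swap, boundarySeq_swap, add_comm γR γL] at hrev

end IsFareyRecursive

section WeightedBoundary

variable {R : Type*} [CommRing R] (d : ℤ × ℤ → Rˣ) (F : ℤ × ℤ → R) (γL γR : ℤ × ℤ)

/-- The values of `F` along the boundary sequence, rescaled by units at negative indices so that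
a single recursion holds over all of `ℤ`. -/
def weightedBoundaryValue (n : ℤ) : R :=
  if 0 ≤ n then F (boundarySeq γL γR n)
  else ((d γL)⁻¹ * d (γL + γR) ^ (n + 1) : Rˣ) * F (boundarySeq γL γR n)

variable {d F γL γR}

theorem weightedBoundaryValue_of_nonneg {n : ℤ} (hn : 0 ≤ n) :
    weightedBoundaryValue d F γL γR n = F (boundarySeq γL γR n) :=
  if_pos hn

theorem weightedBoundaryValue_of_neg {n : ℤ} (hn : n < 0) :
    weightedBoundaryValue d F γL γR n =
      ((d γL)⁻¹ * d (γL + γR) ^ (n + 1) : Rˣ) * F (boundarySeq γL γR n) :=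
  if_neg hn.not_ge

theorem weightedBoundaryValue_neg_one :
    weightedBoundaryValue d F γL γR (-1) = ((d γL)⁻¹ : Rˣ) * F γL := by
  rw [weightedBoundaryValue_of_neg neg_one_lt_zero, neg_add_cancel, zpow_zero, mul_one,
    boundarySeq_neg_one]

theorem weightedBoundaryValue_one (hF : IsFareyRecursive d F) (hγL : Normalised γL)
    (hγR : Normalised γR) (hnbr : FareyNbr γL γR) (hd : d (γL + γR) = d γL * d γR) :
    weightedBoundaryValue d F γL γR 1 =
      -(d (γL + γR) : R) * weightedBoundaryValue d F γL γR (-1) -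
        F (γL + γR) * weightedBoundaryValue d F γL γR 0 := by
  rw [weightedBoundaryValue_of_nonneg zero_le_one, weightedBoundaryValue_neg_one,
    weightedBoundaryValue_of_nonneg le_rfl, boundarySeq_one, boundarySeq_zero,
    hF γL γR hγL hγR hnbr, hd, Units.val_mul]
  linear_combination ((d γR : R) * F γL) * (d γL).mul_inv

theorem weightedBoundaryValue_zero (hF : IsFareyRecursive d F) (hγL : Normalised γL)
    (hγR : Normalised γR) (hnbr : FareyNbr γL γR) :
    weightedBoundaryValue d F γL γR 0 =
      -(d (γL + γR) : R) * weightedBoundaryValue d F γL γR (-2) -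
        F (γL + γR) * weightedBoundaryValue d F γL γR (-1) := by
  rw [weightedBoundaryValue_of_nonneg le_rfl, weightedBoundaryValue_neg_one,
    weightedBoundaryValue_of_neg (by norm_num : (-2 : ℤ) < 0), boundarySeq_zero,
    boundarySeq_neg_two, hF γR γL hγR hγL hnbr.symm, add_comm γR γL,
    show (-2 + 1 : ℤ) = -1 by norm_num, zpow_neg_one, Units.val_mul]
  linear_combination
    (-((d γL)⁻¹ : Rˣ) * (d γL * F γR + F γL * F (γL + γR))) * (d (γL + γR)).mul_inv -
      F γR * (d γL).mul_inv

theorem weightedBoundaryValue_add_two (hF : IsFareyRecursive d F) (hγL : Normalised γL)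
    (hγR : Normalised γR) (hnbr : FareyNbr γL γR) (hd : d (γL + γR) = d γL * d γR) (n : ℤ) :
    weightedBoundaryValue d F γL γR (n + 2) =
      -(d (γL + γR) : R) * weightedBoundaryValue d F γL γR n -
        F (γL + γR) * weightedBoundaryValue d F γL γR (n + 1) := by
  obtain hn | rfl | rfl | hn : 0 ≤ n ∨ n = -1 ∨ n = -2 ∨ n + 2 < 0 := by omega
  · iterate 3 rw [weightedBoundaryValue_of_nonneg (by omega)]
    exact hF.boundarySeq_add_two hγL hγR hnbr hn
  · exact weightedBoundaryValue_one hF hγL hγR hnbr hd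
  · exact weightedBoundaryValue_zero hF hγL hγR hnbr
  · iterate 3 rw [weightedBoundaryValue_of_neg (by omega)]
    rw [hF.boundarySeq_of_add_two_neg hγL hγR hnbr hn, add_right_comm n 2 1,
      show n + 1 + 2 = n + 1 + 1 + 1 by ring, zpow_add_one, zpow_add_one]
    push_cast
    ring

end WeightedBoundary

/-- Adaptation of Theorem 6.1 of Chesebro et al.: the values of a Farey recursive function `F`
with anti-determinant `d` along the boundary sequence `(β_k)` about `α = γ_L ⊕ γ_R` are
computed by the integer powers of the matrix `M_α = [[0, 1], [−d(α), −F(α)]]`. -/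
theorem farey_recursive_boundary {R : Type*} [CommRing R] (d : ℤ × ℤ → Rˣ) (F : ℤ × ℤ → R)
    (hd : MultiplicativeOnNbrs d) (hF : IsFareyRecursive d F)
    (γL γR : ℤ × ℤ) (hγL : Normalised γL) (hγR : Normalised γR) (hnbr : FareyNbr γL γR)
    (α : ℤ × ℤ) (hα : α = γL + γR)
    (β : ℤ → ℤ × ℤ) (hβ : ∀ k : ℤ, β k = if 0 ≤ k then γR + k • α else γL + (-k - 1) • α)
    (M : Matrix (Fin 2) (Fin 2) R) (hM : M = !![0, 1; -(d α : R), -F α]) :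
    ∀ n : ℤ,
      (0 ≤ n → (M ^ n).mulVec ![F (β 0), F (β 1)] = ![F (β n), F (β (n + 1))]) ∧
      (n = -1 → (M ^ n).mulVec ![F (β 0), F (β 1)] =
        ![(((d (β (-1)))⁻¹ : Rˣ) : R) * F (β (-1)), F (β 0)]) ∧
      (n ≤ -2 → (M ^ n).mulVec ![F (β 0), F (β 1)] =
        ![(((d (β (-1)))⁻¹ * d α ^ (n + 1) : Rˣ) : R) * F (β n),
          (((d (β (-1)))⁻¹ * d α ^ (n + 2) : Rˣ) : R) * F (β (n + 1))]) := by
  subst hα hM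
  obtain rfl : β = boundarySeq γL γR := funext hβ
  intro n
  have hpow := companion_zpow_mulVec (d (γL + γR)) (F (γL + γR))
    (weightedBoundaryValue_add_two hF hγL hγR hnbr (hd _ _ hγL hγR hnbr)) n
  rw [weightedBoundaryValue_of_nonneg le_rfl, weightedBoundaryValue_of_nonneg zero_le_one] at hpow
  rw [hpow, boundarySeq_neg_one]
  refine ⟨fun hn => ?_, ?_, fun hn => ?_⟩
  · rw [weightedBoundaryValue_of_nonneg hn, weightedBoundaryValue_of_nonneg (by omega)]
  · rintro rfl
    rw [weightedBoundaryValue_neg_one, neg_add_cancel, weightedBoundaryValue_of_nonneg le_rfl]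
  · rw [weightedBoundaryValue_of_neg (by omega), weightedBoundaryValue_of_neg (by omega),
      add_assoc n 1 1, one_add_one_eq_two]
end

section
/- Let R be a commutative ring and let F be a homogeneous Farey recursive function with values in R. Let γ_L, γ_R be Farey neighbours with mediant α = γ_L ⊕ γ_R, let (β_k)_{k∈ℤ} be the associated boundary sequence, and set M_α = [[0, 1], [−1, −F(α)]], a matrix of determinant 1 over R (hence invertible). Then for every integer n ∈ ℤ, M_α^n · (F(β_0), F(β_1))ᵀ = (F(β_n), F(β_{n+1}))ᵀ. -/
/-- `F` is a homogeneous Farey recursive function: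
`F((γ ⊕ α) ⊕ α) = −F(γ) − F(α)·F(γ ⊕ α)` for Farey neighbours `γ, α`. -/
def IsHomFareyRecursive {R : Type*} [CommRing R] (F : ℤ × ℤ → R) : Prop :=
  ∀ γ α : ℤ × ℤ, Normalised γ → Normalised α → FareyNbr γ α →
    F (γ + α + α) = -F γ - F α * F (γ + α)

/-!
Away from its middle, the boundary sequence consists of two rays `γ + k • α` through Farey
neighbours of `α`, along which the defining recursion with pivot `α` is a two-term linear
recurrence. At the middle, `β₁ = γL + γR + γR` is obtained from `γL` with pivot `γR` instead, so
the recursion reads `F β₁ = -F γL - F γR * F α`; as `R` is commutative this is again the recurrence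
with coefficient `F α`. The recurrence is palindromic, and exchanging `γL` and `γR` reverses the
boundary sequence, so the left half follows from the right half.
-/

namespace FareyNbr

variable {x y : ℤ × ℤ}

theorem symm_s13 (h : FareyNbr x y) : FareyNbr y x := by
  have hneg : y.1 * x.2 - y.2 * x.1 = -(x.1 * y.2 - x.2 * y.1) := by ring
  rwa [FareyNbr, hneg, Int.natAbs_neg]

theorem add_nsmul_left (h : FareyNbr x y) (k : ℕ) : FareyNbr (x + k • y) y := by
  have hdet : (x + k • y).1 * y.2 - (x + k • y).2 * y.1 = x.1 * y.2 - x.2 * y.1 := by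
    simp only [Prod.fst_add, Prod.snd_add, Prod.smul_fst, Prod.smul_snd]
    ring
  rwa [FareyNbr, hdet]

theorem add_left_s13 (h : FareyNbr x y) : FareyNbr (x + y) y := by
  simpa only [one_smul] using h.add_nsmul_left 1

theorem gcd_eq_one (h : FareyNbr x y) : Int.gcd x.1 x.2 = 1 := by
  have hdvd : (Int.gcd x.1 x.2 : ℤ) ∣ x.1 * y.2 - x.2 * y.1 :=
    dvd_sub ((Int.gcd_dvd_left ..).mul_right _) ((Int.gcd_dvd_right ..).mul_right _)
  rw [Int.natCast_dvd, h] at hdvd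
  exact Nat.dvd_one.mp hdvd

end FareyNbr

namespace Normalised

variable {x y : ℤ × ℤ}

theorem snd_nonneg (hx : Normalised x) : 0 ≤ x.2 :=
  hx.2.elim le_of_lt fun h ↦ h.1.ge

theorem add_s13 (hx : Normalised x) (hy : Normalised y) (h : FareyNbr x y) : Normalised (x + y) := by
  have hne : ¬(x.2 = 0 ∧ y.2 = 0) := fun ⟨hx₀, hy₀⟩ ↦ by simp [FareyNbr, hx₀, hy₀] at h
  have hpos : 0 < x.2 + y.2 := by
    have := hx.snd_nonneg
    have := hy.snd_nonneg
    omega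
  exact ⟨h.add_left_s13.gcd_eq_one, Or.inl hpos⟩

theorem add_nsmul (hx : Normalised x) (hy : Normalised y) (h : FareyNbr x y) (k : ℕ) :
    Normalised (x + k • y) := by
  induction k with
  | zero => simpa only [zero_smul, add_zero] using hx
  | succ k ih =>
    rw [succ_nsmul, ← add_assoc]
    exact ih.add_s13 hy (h.add_nsmul_left k)

end Normalised

/-- The boundary sequence `(β_k)` of the Farey neighbours `γL`, `γR`, running through
`β₋₁ = γL` and `β₀ = γR`; all its members are Farey neighbours of the mediant `γL + γR`. -/
def fareyBoundary (γL γR : ℤ × ℤ) (k : ℤ) : ℤ × ℤ :=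
  if 0 ≤ k then γR + k • (γL + γR) else γL + (-k - 1) • (γL + γR)

theorem fareyBoundary_natCast (γL γR : ℤ × ℤ) (k : ℕ) :
    fareyBoundary γL γR k = γR + k • (γL + γR) := by
  rw [fareyBoundary, if_pos k.cast_nonneg, natCast_zsmul]

theorem fareyBoundary_neg_one_sub (γL γR : ℤ × ℤ) (k : ℤ) :
    fareyBoundary γL γR (-1 - k) = fareyBoundary γR γL k := by
  have hk : -(-1 - k) - 1 = k := by ring
  unfold fareyBoundary
  rw [hk, add_comm γR γL]
  rcases le_or_gt 0 k with hk₀ | hk₀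
  · rw [if_neg (by omega), if_pos hk₀]
  · rw [if_pos (by omega), if_neg (by omega), neg_sub_left, neg_add', add_comm]

namespace IsHomFareyRecursive

variable {R : Type*} [CommRing R] {F : ℤ × ℤ → R}

theorem map_add_add_two_nsmul (hF : IsHomFareyRecursive F) {γ α : ℤ × ℤ} (hγ : Normalised γ)
    (hα : Normalised α) (h : FareyNbr γ α) (k : ℕ) :
    F (γ + (k + 2) • α) = -F (γ + k • α) - F α * F (γ + (k + 1) • α) := by
  have hrec := hF _ α (hγ.add_nsmul hα h k) hα (h.add_nsmul_left k)
  simpa only [add_assoc, ← succ_nsmul] using hrec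

theorem map_add_mediant (hF : IsHomFareyRecursive F) {γL γR : ℤ × ℤ} (hL : Normalised γL)
    (hR : Normalised γR) (h : FareyNbr γL γR) :
    F (γR + (γL + γR)) = -F γL - F (γL + γR) * F γR := by
  rw [add_comm γR, hF γL γR hL hR h, mul_comm]

theorem map_fareyBoundary_add_two_of_neg_one_le (hF : IsHomFareyRecursive F) {γL γR : ℤ × ℤ}
    (hL : Normalised γL) (hR : Normalised γR) (h : FareyNbr γL γR) {n : ℤ} (hn : -1 ≤ n) :
    F (fareyBoundary γL γR (n + 2)) =
      -F (fareyBoundary γL γR n) - F (γL + γR) * F (fareyBoundary γL γR (n + 1)) := by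
  obtain rfl | hn₀ : n = -1 ∨ 0 ≤ n := by omega
  · simpa [fareyBoundary] using hF.map_add_mediant hL hR h
  · lift n to ℕ using hn₀
    have hrec := hF.map_add_add_two_nsmul hR (hL.add_s13 hR h) h.add_left_s13.symm_s13 n
    simp only [← fareyBoundary_natCast] at hrec
    exact_mod_cast hrec

theorem map_fareyBoundary_add_two (hF : IsHomFareyRecursive F) {γL γR : ℤ × ℤ}
    (hL : Normalised γL) (hR : Normalised γR) (h : FareyNbr γL γR) (n : ℤ) :
    F (fareyBoundary γL γR (n + 2)) =
      -F (fareyBoundary γL γR n) - F (γL + γR) * F (fareyBoundary γL γR (n + 1)) := by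
  rcases le_or_gt (-1) n with hn | hn
  · exact hF.map_fareyBoundary_add_two_of_neg_one_le hL hR h hn
  · have hrefl := hF.map_fareyBoundary_add_two_of_neg_one_le hR hL h.symm_s13
      (n := -1 - (n + 2)) (by omega)
    have hmid : -1 - (n + 2) + 1 = -1 - (n + 1) := by ring
    have hend : -1 - (n + 2) + 2 = -1 - n := by ring
    simp only [hmid, hend, fareyBoundary_neg_one_sub, add_comm γR γL] at hrefl
    linear_combination hrefl

end IsHomFareyRecursive

section LinearRecurrence

open Matrix

variable {R : Type*} [CommRing R]

theorem zpow_mulVec_eq_of_mulVec_eq_succ {ι : Type*} [Fintype ι] [DecidableEq ι]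
    {M : Matrix ι ι R} (hM : IsUnit M.det) {v : ℤ → ι → R} (hv : ∀ n, M *ᵥ v n = v (n + 1))
    (n : ℤ) : M ^ n *ᵥ v 0 = v n := by
  have mul_zpow (k : ℤ) : M * M ^ k = M ^ (k + 1) := by rw [add_comm, zpow_one_add hM]
  induction n with
  | zero => rw [zpow_zero, one_mulVec]
  | succ n ih => rw [← mul_zpow, ← mulVec_mulVec, ih, hv]
  | pred n ih =>
    apply mulVec_injective_of_isUnit ((isUnit_iff_isUnit_det M).mpr hM)
    rw [mulVec_mulVec, mul_zpow, hv, sub_add_cancel, ih]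

theorem companion_zpow_mulVec_of_recurrence {a b : R} (ha : IsUnit a) {u : ℤ → R}
    (hu : ∀ n, u (n + 2) = a * u n + b * u (n + 1)) (n : ℤ) :
    !![0, 1; a, b] ^ n *ᵥ ![u 0, u 1] = ![u n, u (n + 1)] := by
  have hdet : IsUnit (!![0, 1; a, b] : Matrix (Fin 2) (Fin 2) R).det := by
    simpa [det_fin_two] using ha
  have hstep (k : ℤ) : !![0, 1; a, b] *ᵥ ![u k, u (k + 1)] = ![u (k + 1), u (k + 1 + 1)] := by
    rw [add_assoc k, one_add_one_eq_two, hu]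
    ext i
    fin_cases i <;> simp [mulVec, dotProduct, Fin.sum_univ_two]
  exact zpow_mulVec_eq_of_mulVec_eq_succ hdet hstep n

end LinearRecurrence

/-- For a homogeneous Farey recursive function `F`, the values along the boundary sequence
`(β_k)` about `α = γ_L ⊕ γ_R` are computed by integer powers of the determinant-one matrix
`M_α = [[0, 1], [−1, −F(α)]]`. -/
theorem hom_farey_recursive_boundary {R : Type*} [CommRing R] (F : ℤ × ℤ → R)
    (hF : IsHomFareyRecursive F)
    (γL γR : ℤ × ℤ) (hγL : Normalised γL) (hγR : Normalised γR) (hnbr : FareyNbr γL γR)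
    (α : ℤ × ℤ) (hα : α = γL + γR)
    (β : ℤ → ℤ × ℤ) (hβ : ∀ k : ℤ, β k = if 0 ≤ k then γR + k • α else γL + (-k - 1) • α)
    (M : Matrix (Fin 2) (Fin 2) R) (hM : M = !![0, 1; -1, -F α]) :
    ∀ n : ℤ, (M ^ n).mulVec ![F (β 0), F (β 1)] = ![F (β n), F (β (n + 1))] := by
  obtain rfl : β = fareyBoundary γL γR := funext fun k ↦ by rw [hβ, hα, fareyBoundary]
  subst hα hM
  refine companion_zpow_mulVec_of_recurrence isUnit_one.neg
    (u := fun n ↦ F (fareyBoundary γL γR n)) fun n ↦ ?_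
  rw [hF.map_fareyBoundary_add_two hγL hγR hnbr n]
  ring
end

section
/- Let z ∈ ℂ with z ≠ 4 and let w ∈ ℂ satisfy w² = z² − 4z. Define the sequence (a_n) by a_0 = 2, a_1 = 2 + z, and a_n = 8 − a_{n−2} − (2 − z)·a_{n−1} for n ≥ 2. Then for every n ≥ 0, a_n = 8/(4 − z) + (2^{−n} z/(z − 4))·( (z − 2 − w)^n + (z − 2 + w)^n ). -/
/-!
The constant `8 / (4 - z)` is the fixed point of the recurrence, and subtracting it leaves the
homogeneous recurrence with characteristic polynomial `X ^ 2 - (z - 2) * X + 1`. Its discriminant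
is `z ^ 2 - 4 * z`, so its roots are `(z - 2 ± w) / 2`, and the initial values give both of them
the coefficient `z / (z - 4)`.
-/

section CommRing

variable {R : Type*} [CommRing R] {x y α β : R}

theorem eq_mul_pow_add_mul_pow_of_recurrence {b : ℕ → R} (h0 : b 0 = α + β)
    (h1 : b 1 = α * x + β * y) (hb : ∀ n, b (n + 2) = (x + y) * b (n + 1) - x * y * b n)
    (n : ℕ) : b n = α * x ^ n + β * y ^ n := by
  induction n using Nat.twoStepInduction with
  | zero => simpa using h0
  | one => simpa using h1
  | more n ih ih' =>
    rw [hb, ih, ih']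
    ring

theorem eq_add_mul_pow_add_mul_pow_of_affine_recurrence {c f : R} {a : ℕ → R}
    (hf : f = c + (x + y) * f - x * y * f) (h0 : a 0 = f + (α + β))
    (h1 : a 1 = f + (α * x + β * y))
    (ha : ∀ n, a (n + 2) = c + (x + y) * a (n + 1) - x * y * a n) (n : ℕ) :
    a n = f + (α * x ^ n + β * y ^ n) := by
  have hb (n : ℕ) : a (n + 2) - f = (x + y) * (a (n + 1) - f) - x * y * (a n - f) := by
    linear_combination ha n - hf
  exact sub_eq_iff_eq_add'.mp <| eq_mul_pow_add_mul_pow_of_recurrence (b := fun n ↦ a n - f)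
    (sub_eq_iff_eq_add'.mpr h0) (sub_eq_iff_eq_add'.mpr h1) hb n

end CommRing

section Field

variable {K : Type*} [Field K] [NeZero (2 : K)]

theorem sub_div_two_add_add_div_two (s w : K) : (s - w) / 2 + (s + w) / 2 = s := by
  rw [← add_div, sub_add_add_cancel, add_self_div_two]

theorem sub_div_two_mul_add_div_two_of_sq_eq {s p w : K} (hw : w ^ 2 = s ^ 2 - 4 * p) :
    (s - w) / 2 * ((s + w) / 2) = p := by
  have h2 : (2 : K) ≠ 0 := two_ne_zero
  field_simp
  linear_combination -hw

theorem farey_polynomial_closed_form_general {z w : K} (hz : z ≠ 4) (hw : w ^ 2 = z ^ 2 - 4 * z)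
    {a : ℕ → K} (h0 : a 0 = 2) (h1 : a 1 = 2 + z)
    (ha : ∀ n : ℕ, a (n + 2) = 8 - a n - (2 - z) * a (n + 1)) (n : ℕ) :
    a n = 8 / (4 - z) +
      (2 : K) ^ (-(n : ℤ)) * z / (z - 4) * ((z - 2 - w) ^ n + (z - 2 + w) ^ n) := by
  have hz' : 4 - z ≠ 0 := sub_ne_zero.mpr hz.symm
  have hneg : z / (z - 4) = -z / (4 - z) := by rw [← neg_sub 4 z, div_neg, neg_div]
  have hsum := sub_div_two_add_add_div_two (z - 2) w
  have hprod : (z - 2 - w) / 2 * ((z - 2 + w) / 2) = 1 :=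
    sub_div_two_mul_add_div_two_of_sq_eq (by linear_combination hw)
  have hroots : a n = 8 / (4 - z) + (z / (z - 4) * ((z - 2 - w) / 2) ^ n +
      z / (z - 4) * ((z - 2 + w) / 2) ^ n) := by
    apply eq_add_mul_pow_add_mul_pow_of_affine_recurrence (c := 8)
    · rw [hsum, hprod]
      field_simp
      ring
    · rw [h0, hneg]
      field_simp
      ring
    · rw [h1, ← mul_add, hsum, hneg]
      field_simp
      ring
    · intro n
      rw [hsum, hprod]
      linear_combination ha n
  rw [hroots, zpow_neg, zpow_natCast, div_pow, div_pow]
  ring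

end Field

/-- Closed-form solution of the non-homogeneous recurrence
`a_n = 8 − a_{n−2} − (2 − z)·a_{n−1}` with `a_0 = 2`, `a_1 = 2 + z` (the sequence of parabolic
Farey polynomials `Φ_{1/n}(z)`), where `w` is a fixed square root of `z² − 4z` and `z ≠ 4`. -/
theorem farey_polynomial_closed_form (z w : ℂ) (hz : z ≠ 4) (hw : w ^ 2 = z ^ 2 - 4 * z)
    (a : ℕ → ℂ) (h0 : a 0 = 2) (h1 : a 1 = 2 + z)
    (ha : ∀ n : ℕ, a (n + 2) = 8 - a n - (2 - z) * a (n + 1)) :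
    ∀ n : ℕ, a n = 8 / (4 - z) +
      (2 : ℂ) ^ (-(n : ℤ)) * z / (z - 4) * ((z - 2 - w) ^ n + (z - 2 + w) ^ n) :=
  farey_polynomial_closed_form_general hz hw h0 h1 ha
end
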